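/- arXiv:2110.07854 — 2 statements merged into one kernel-verified Lean document; each statement's English description precedes it below -/
import Mathlib

section
/- For every prime p, every real β > 0, and every integer N ≥ 1, Σ_{k=1}^{N} [Z_{N−k}(pℤ_p,β)/(N−k)!]·[Z_k(ℤ_p,β)/(k−1)!] = p · Σ_{k=1}^{N} [Z_{N−k}(ℤ_p,β)/(N−k)!]·[Z_k(pℤ_p,β)/(k−1)!]. -/
open MeasureTheory
open scoped LinearAlgebra.Projectivization

namespace LogCoulomb

noncomputable section

/-! ### The projective line over `ℚ_p`, its spherical metric and `PGL₂`-invariant measure -/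

variable (p : ℕ) [Fact p.Prime]

instance : MeasurableSpace ℚ_[p] := borel _
instance : BorelSpace ℚ_[p] := ⟨rfl⟩

/-- The projective line over `ℚ_p`. -/
abbrev P1 := ℙ ℚ_[p] (Fin 2 → ℚ_[p])

instance : TopologicalSpace (P1 p) :=
  inferInstanceAs (TopologicalSpace (Quotient _))

instance : MeasurableSpace (P1 p) := borel _
instance : BorelSpace (P1 p) := ⟨rfl⟩

/-- Spherical distance on homogeneous coordinates:
`δ((x₀,x₁),(y₀,y₁)) = |x₀y₁ - x₁y₀| / (max(|x₀|,|x₁|) ⬝ max(|y₀|,|y₁|))`. -/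
def sdelta (x y : Fin 2 → ℚ_[p]) : ℝ :=
  ‖x 0 * y 1 - x 1 * y 0‖ / (max ‖x 0‖ ‖x 1‖ * max ‖y 0‖ ‖y 1‖)

/-- The spherical metric on `ℙ¹(ℚ_p)`, defined via the canonical representatives. -/
def pdelta (ξ η : P1 p) : ℝ := sdelta p ξ.rep η.rep

open Classical in
/-- The action of a matrix on `ℙ¹(ℚ_p)`: `[x₀:x₁] ↦ [a x₀ + b x₁ : c x₀ + d x₁]`
(well-defined, and given by the first branch of the `if`, whenever `A` is invertible). -/
def mobius (A : Matrix (Fin 2) (Fin 2) ℚ_[p]) (ξ : P1 p) : P1 p :=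
  if h : A.mulVec ξ.rep ≠ 0 then Projectivization.mk ℚ_[p] (A.mulVec ξ.rep) h else ξ

/-- `ν` is invariant under the action of `GL₂(ℤ_p)` on `ℙ¹(ℚ_p)`; membership of the matrix
entries in `ℤ_p`, and invertibility of the matrix over `ℤ_p`, are phrased via the `p`-adic
norm on `ℚ_p`. -/
def IsGLInvariant (ν : Measure (P1 p)) : Prop :=
  ∀ A : Matrix (Fin 2) (Fin 2) ℚ_[p],
    (∀ i j, ‖A i j‖ ≤ 1) → ‖A.det‖ = 1 →
      ∀ M : Set (P1 p), MeasurableSet M → ν (mobius p A '' M) = ν M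

/-- The embedding `ι : ℚ_p → ℙ¹(ℚ_p)`, `x ↦ [x : 1]`. -/
def iota (x : ℚ_[p]) : P1 p :=
  Projectivization.mk ℚ_[p] ![x, 1] (by
    intro h
    have h1 := congrFun h 1
    simp at h1)

/-! ### Canonical partition functions -/

/-- The pairs `(i,j)` with `i < j`. -/
def pairs (N : ℕ) : Finset (Fin N × Fin N) := Finset.univ.filter fun q => q.1 < q.2

/-- The closed unit ball `ℤ_p = R` inside `ℚ_p`. -/
def Zball : Set ℚ_[p] := {x | ‖x‖ ≤ 1}

/-- The open unit ball `pℤ_p = P` inside `ℚ_p`. -/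
def Pball : Set ℚ_[p] := {x | ‖x‖ < 1}

/-- The one-component canonical partition function
`Z_N(X, β) = ∫_{X^N} ∏_{i<j} |x_i - x_j|^β dμ^N` (as a Bochner integral, whether or not it
converges absolutely). -/
def ZN (μ : Measure ℚ_[p]) [SigmaFinite μ] (X : Set ℚ_[p]) (N : ℕ) (β : ℂ) : ℂ :=
  ∫ x : Fin N → ℚ_[p], ∏ q ∈ pairs N, (‖x q.1 - x q.2‖ : ℂ) ^ β
    ∂(Measure.pi fun _ => μ.restrict X)

/-- The multivariate canonical partition function
`𝒵_I(X, s) = ∫_{X^I} ∏_{i<j, i,j ∈ I} |x_i - x_j|^{s_{ij}} dμ^I` for a subset `I ⊆ [N]`. -/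
def ZI (μ : Measure ℚ_[p]) [SigmaFinite μ] (X : Set ℚ_[p]) {N : ℕ} (I : Finset (Fin N))
    (s : Fin N → Fin N → ℂ) : ℂ :=
  ∫ x : I → ℚ_[p],
    ∏ q ∈ Finset.univ.filter (fun q : (↥I) × (↥I) => (q.1 : Fin N) < (q.2 : Fin N)),
      (‖x q.1 - x q.2‖ : ℂ) ^ s q.1.1 q.2.1
    ∂(Measure.pi fun _ => μ.restrict X)

/-- The multivariate canonical partition function
`𝒵_N(ℙ¹(ℚ_p), s) = ∫_{(ℙ¹(ℚ_p))^N} ∏_{i<j} δ(ξ_i,ξ_j)^{s_{ij}} dν^N`. -/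
def ZP1s (ν : Measure (P1 p)) [SigmaFinite ν] (N : ℕ) (s : Fin N → Fin N → ℂ) : ℂ :=
  ∫ x : Fin N → P1 p, ∏ q ∈ pairs N, ((pdelta p (x q.1) (x q.2) : ℝ) : ℂ) ^ s q.1 q.2
    ∂(Measure.pi fun _ => ν)

/-- The one-component canonical partition function `Z_N(ℙ¹(ℚ_p), β)`. -/
def ZP1 (ν : Measure (P1 p)) [SigmaFinite ν] (N : ℕ) (β : ℂ) : ℂ :=
  ∫ x : Fin N → P1 p, ∏ q ∈ pairs N, ((pdelta p (x q.1) (x q.2) : ℝ) : ℂ) ^ β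
    ∂(Measure.pi fun _ => ν)

/-! ### The quadratic recurrence -/

/-- The factor `ρ_{N,k}(t,β)` appearing in the quadratic recurrence; here
`N.choose 2 = N(N-1)/2`. -/
def rho (N k : ℕ) (t : ℝ) (β : ℂ) : ℂ :=
  if t = 0 then
    (((N : ℂ) + (N.choose 2 : ℂ) * β) * (1 - 2 * (k : ℂ) / (N : ℂ)) + 1) /
      (((N : ℂ) + (N.choose 2 : ℂ) * β) - 1)
  else
    Complex.sinh (((t : ℂ) / 2) * (((N : ℂ) + (N.choose 2 : ℂ) * β) * (1 - 2 * (k : ℂ) / (N : ℂ)) + 1)) /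
      Complex.sinh (((t : ℂ) / 2) * (((N : ℂ) + (N.choose 2 : ℂ) * β) - 1))

/-- The quadratic recurrence: `F 0 = F 1 = 1` and
`F N t β = ∑_{k=1}^{N-1} (k/N) ρ_{N,k}(t,β) F_{N-k}(t,β) F_k(t,β)` for `N ≥ 2`. -/
def F : ℕ → ℝ → ℂ → ℂ
  | 0, _, _ => 1
  | 1, _, _ => 1
  | N + 2, t, β =>
    ∑ k ∈ (Finset.Icc 1 (N + 1)).attach,
      (((k : ℕ) : ℂ) / ((N : ℂ) + 2)) * rho (N + 2) k t β *
        F (N + 2 - (k : ℕ)) t β * F (k : ℕ) t β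
  decreasing_by
  all_goals
    have hk := Finset.mem_Icc.mp k.2
    omega

/-! ### Splitting chains -/

/-- A splitting chain `Λ_0 > Λ_1 > ⋯ > Λ_L` of set partitions of the subset `I ⊆ [N]`,
beginning with the trivial partition `{I}` and ending with the partition of `I` into
singletons.  (The values `Λ ℓ` for `ℓ > L` are required to be `∅`, so that a chain is
determined by the genuine data `Λ_0, …, Λ_L`.) -/
structure SplChain (N : ℕ) (I : Finset (Fin N)) where
  L : ℕ
  Λ : ℕ → Finset (Finset (Fin N))
  nonempty_mem : ∀ ℓ ≤ L, ∀ B ∈ Λ ℓ, B.Nonempty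
  subset_mem : ∀ ℓ ≤ L, ∀ B ∈ Λ ℓ, B ⊆ I
  cover : ∀ ℓ ≤ L, ∀ i ∈ I, ∃! B, B ∈ Λ ℓ ∧ i ∈ B
  first : Λ 0 = {I}
  last : Λ L = I.image fun i => {i}
  refines : ∀ ℓ < L, ∀ B ∈ Λ (ℓ + 1), ∃ C ∈ Λ ℓ, B ⊆ C
  strict : ∀ ℓ < L, Λ (ℓ + 1) ≠ Λ ℓ
  trailing : ∀ ℓ, L < ℓ → Λ ℓ = ∅

variable {N : ℕ} {I : Finset (Fin N)}

/-- The branches of a splitting chain: the non-singleton parts,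
`ℬ(𝔖) = (Λ_0 ∪ ⋯ ∪ Λ_{L-1}) \ Λ_L`. -/
def SplChain.branches (S : SplChain N I) : Finset (Finset (Fin N)) :=
  ((Finset.range S.L).biUnion S.Λ) \ S.Λ S.L

/-- The depth `ℓ_𝔖(λ) = max {ℓ : λ ∈ Λ_ℓ}` of a branch. -/
def SplChain.depth (S : SplChain N I) (lam : Finset (Fin N)) : ℕ :=
  ((Finset.range (S.L + 1)).filter fun ℓ => lam ∈ S.Λ ℓ).sup id

/-- The degree `deg_𝔖(λ) = #{λ' ∈ Λ_{ℓ_𝔖(λ)+1} : λ' ⊆ λ}` of a branch. -/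
def SplChain.degree (S : SplChain N I) (lam : Finset (Fin N)) : ℕ :=
  ((S.Λ (S.depth lam + 1)).filter fun lam' => lam' ⊆ lam).card

/-- A splitting chain is reduced if every branch appears in exactly one partition of the
chain (namely the one at its depth). -/
def SplChain.Reduced (S : SplChain N I) : Prop :=
  ∀ lam ∈ S.branches, ∀ ℓ ≤ S.L, (lam ∈ S.Λ ℓ ↔ ℓ = S.depth lam)

/-- `e_λ(s) = #λ - 1 + ∑_{i<j, i,j ∈ λ} s_{ij}`. -/
def eexp (lam : Finset (Fin N)) (s : Fin N → Fin N → ℂ) : ℂ :=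
  (lam.card : ℂ) - 1 + ∑ q ∈ (pairs N).filter fun q => q.1 ∈ lam ∧ q.2 ∈ lam, s q.1 q.2

/-- Membership in `Ω_I`: `Re e_λ(s) > 0` for every `λ ⊆ I` with `#λ > 1`. -/
def InOmega (I : Finset (Fin N)) (s : Fin N → Fin N → ℂ) : Prop :=
  ∀ lam ⊆ I, 1 < lam.card → 0 < (eexp lam s).re


/-- The multivariate canonical partition function `𝒵_N(ℤ_p, s)` over `Fin N`-indexed tuples. -/
def ZNs (μ : Measure ℚ_[p]) [SigmaFinite μ] (X : Set ℚ_[p]) (N : ℕ)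
    (s : Fin N → Fin N → ℂ) : ℂ :=
  ∫ x : Fin N → ℚ_[p], ∏ q ∈ pairs N, (‖x q.1 - x q.2‖ : ℂ) ^ s q.1 q.2
    ∂(Measure.pi fun _ => μ.restrict X)

/-- The ball `p^v ℤ_p = {x : |x| ≤ p^{-v}}` in `ℚ_p`. -/
def pvball (v : ℤ) : Set ℚ_[p] := {x | ‖x‖ ≤ (p : ℝ) ^ (-v)}

/-- `G_N(q,β) = N! q^{(1/2)(N choose 2)β} F_N(log q, β)`. -/
def GN (N : ℕ) (β : ℂ) (q : ℝ) : ℂ :=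
  (N.factorial : ℂ) * (q : ℂ) ^ ((N.choose 2 : ℂ) * β / 2) * F N (Real.log q) β

/-- `H_N(q,β)`, the efficient formula for `Z_N(ℙ¹(K),β)` as a function of `q`. -/
def HN (N : ℕ) (β : ℂ) (q : ℝ) : ℂ :=
  (N.factorial : ℂ) * ∑ k ∈ Finset.range (N + 1),
    Complex.cosh (((Real.log q : ℂ) / 2) * ((N : ℂ) + (N.choose 2 : ℂ) * β) *
          (1 - 2 * (k : ℂ) / (N : ℂ))) /
        (2 * Complex.cosh ((Real.log q : ℂ) / 2)) ^ N *
      F (N - k) (Real.log q) β * F k (Real.log q) β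

end

section helpers

open scoped ENNReal

variable (p : ℕ) [Fact p.Prime]

noncomputable def kern (β : ℝ) (a b : ℚ_[p]) : ℝ≥0∞ := ENNReal.ofReal (‖a - b‖ ^ (β / 2))

open Classical in
noncomputable def KK (β : ℝ) {ι : Type} (i j : ι) (a b : ℚ_[p]) : ℝ≥0∞ :=
  if i = j then 1 else kern p β a b

lemma KK_self (β : ℝ) {ι : Type} (i : ι) (a b : ℚ_[p]) : KK p β i i a b = 1 := by
  simp [KK]

lemma KK_ne (β : ℝ) {ι : Type} {i j : ι} (h : i ≠ j) (a b : ℚ_[p]) :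
    KK p β i j a b = kern p β a b := by
  simp [KK, h]

lemma KK_inj (β : ℝ) {ι κ : Type} (e : κ → ι) (he : Function.Injective e) (i j : κ)
    (a b : ℚ_[p]) : KK p β (e i) (e j) a b = KK p β i j a b := by
  by_cases h : i = j
  · subst h; simp [KK_self]
  · rw [KK_ne p β h, KK_ne p β (he.ne h)]

noncomputable def VV (β : ℝ) {ι : Type} [Fintype ι] (x : ι → ℚ_[p]) : ℝ≥0∞ :=
  ∏ i, ∏ j, KK p β i j (x i) (x j)

noncomputable def WW (β : ℝ) (ι : Type) [Fintype ι] (ν : Measure ℚ_[p]) : ℝ≥0∞ :=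
  ∫⁻ x : ι → ℚ_[p], VV p β x ∂(Measure.pi fun _ => ν)

lemma kern_comm (β : ℝ) (a b : ℚ_[p]) : kern p β a b = kern p β b a := by
  unfold kern; rw [norm_sub_rev]

lemma measurable_VV (β : ℝ) {ι : Type} [Fintype ι] :
    Measurable (fun x : ι → ℚ_[p] => VV p β x) := by
  unfold VV KK kern
  refine Finset.measurable_prod _ fun i _ => Finset.measurable_prod _ fun j _ => ?_
  split_ifs
  · exact measurable_const
  · refine ENNReal.measurable_ofReal.comp (Measurable.pow_const ?_ _)
    have : Continuous fun x : ι → ℚ_[p] => ‖x i - x j‖ := by fun_prop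
    exact this.measurable

lemma VV_equiv (β : ℝ) {ι κ : Type} [Fintype ι] [Fintype κ] (e : κ ≃ ι) (x : ι → ℚ_[p]) :
    VV p β (fun k => x (e k)) = VV p β x := by
  unfold VV
  rw [← e.prod_comp]
  refine Finset.prod_congr rfl fun i _ => ?_
  rw [← e.prod_comp]
  refine Finset.prod_congr rfl fun j _ => ?_
  exact (KK_inj p β e e.injective i j _ _).symm

lemma WW_equiv (β : ℝ) {ι κ : Type} [Fintype ι] [Fintype κ] (e : ι ≃ κ)
    (ν : Measure ℚ_[p]) [SigmaFinite ν] :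
    WW p β ι ν = WW p β κ ν := by
  have h := measurePreserving_piCongrLeft (fun _ : κ => ν) e
  unfold WW
  rw [← h.lintegral_comp (measurable_VV p β)]
  refine lintegral_congr fun x => ?_
  rw [← VV_equiv p β e]
  congr 1
  funext k
  exact (Equiv.piCongrLeft_apply_apply (fun _ : κ => ℚ_[p]) e x k).symm

lemma pi_add_eq {ι : Type} [Fintype ι] [DecidableEq ι] (ν₁ ν₂ : Measure ℚ_[p])
    [SigmaFinite ν₁] [SigmaFinite ν₂] :
    Measure.pi (fun _ : ι => ν₁ + ν₂) =
      ∑ S : Finset ι, Measure.pi (fun i => if i ∈ S then ν₁ else ν₂) := by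
  have (S : Finset ι) (i : ι) : SigmaFinite (if i ∈ S then ν₁ else ν₂) := by
    split_ifs <;> infer_instance
  refine Measure.pi_eq fun s hs => ?_
  rw [Measure.finsetSum_apply]
  simp only [Measure.pi_pi, Measure.add_apply]
  rw [Finset.prod_add, Finset.powerset_univ]
  refine Finset.sum_congr rfl fun S _ => ?_
  rw [← Finset.prod_mul_prod_compl S]
  congr 1
  · exact Finset.prod_congr rfl fun i hi => by simp [hi]
  · rw [← Finset.compl_eq_univ_sdiff]
    exact Finset.prod_congr rfl fun i hi => by
      rw [Finset.mem_compl] at hi; simp [hi]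

lemma VV_split (β : ℝ) {ι : Type} [Fintype ι] [DecidableEq ι] (S : Finset ι) (x : ι → ℚ_[p])
    (hx : ∀ i ∈ S, ∀ j ∉ S, ‖x i - x j‖ = 1) :
    VV p β x = VV p β (fun i : {i // i ∈ S} => x i) * VV p β (fun i : {i // i ∉ S} => x i) := by
  have hk : ∀ i ∈ S, ∀ j ∉ S, kern p β (x i) (x j) = 1 := by
    intro i hi j hj
    simp [kern, hx i hi j hj]
  unfold VV
  rw [← Fintype.prod_subtype_mul_prod_subtype (fun i => i ∈ S)]
  congr 1
  · refine Finset.prod_congr (by congr!) fun i _ => ?_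
    rw [← Fintype.prod_subtype_mul_prod_subtype (fun i => i ∈ S)]
    have h1 : ∏ j : {i // i ∉ S}, KK p β (i : ι) (j : ι) (x i) (x j) = 1 := by
      refine Finset.prod_eq_one fun j _ => ?_
      rw [KK_ne p β (fun h => by have hi := i.2; have hj := j.2; rw [h] at hi; exact absurd hj (by simpa using hi))]
      exact hk _ i.2 _ j.2
    have h2 : ∏ j : {i // i ∈ S}, KK p β (i : ι) (j : ι) (x i) (x j) =
        ∏ j : {i // i ∈ S}, KK p β i j (x i) (x j) :=
      Finset.prod_congr rfl fun j _ => KK_inj p β _ Subtype.val_injective i j _ _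
    rw [← h2]; convert mul_one _ using 2; congr!
  · refine Finset.prod_congr rfl fun i _ => ?_
    rw [← Fintype.prod_subtype_mul_prod_subtype (fun i => i ∈ S)]
    have h1 : ∏ j : {i // i ∈ S}, KK p β (i : ι) (j : ι) (x i) (x j) = 1 := by
      refine Finset.prod_eq_one fun j _ => ?_
      rw [KK_ne p β (fun h => by have hi := i.2; have hj := j.2; rw [h] at hi; exact absurd hj (by simpa using hi))]
      rw [kern_comm]; exact hk _ j.2 _ i.2
    have h2 : ∏ j : {i // i ∉ S}, KK p β (i : ι) (j : ι) (x i) (x j) =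
        ∏ j : {i // i ∉ S}, KK p β i j (x i) (x j) :=
      Finset.prod_congr rfl fun j _ => KK_inj p β _ Subtype.val_injective i j _ _
    rw [← h2]; convert one_mul _ using 2; convert h1

lemma WW_term (β : ℝ) {ι : Type} [Fintype ι] [DecidableEq ι] (μ : Measure ℚ_[p]) [SigmaFinite μ]
    (X Y : Set ℚ_[p]) (hX : MeasurableSet X) (hY : MeasurableSet Y)
    (hXY : ∀ x ∈ X, ∀ y ∈ Y, ‖x - y‖ = 1) (S : Finset ι) :
    ∫⁻ x : ι → ℚ_[p], VV p β x ∂(Measure.pi fun i => if i ∈ S then μ.restrict X else μ.restrict Y)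
     = WW p β {i // i ∈ S} (μ.restrict X) * WW p β {i // i ∉ S} (μ.restrict Y) := by
  set ν : ι → Measure ℚ_[p] := fun i => if i ∈ S then μ.restrict X else μ.restrict Y with hν
  have hs (i : ι) : SigmaFinite (ν i) := by
    simp only [hν]; split_ifs <;> infer_instance
  have hmp := measurePreserving_piEquivPiSubtypeProd ν (fun i => i ∈ S)
  have hae : ∀ᵐ x ∂(Measure.pi ν), ∀ i, x i ∈ (if i ∈ S then X else Y) := by
    rw [ae_all_iff]
    intro i
    refine (Measure.tendsto_eval_ae_ae (μ := ν) (i := i)).eventually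
      (p := fun y => y ∈ (if i ∈ S then X else Y)) ?_
    simp only [hν]
    split_ifs
    · exact ae_restrict_mem hX
    · exact ae_restrict_mem hY
  have h1 : ∫⁻ x, VV p β x ∂(Measure.pi ν) =
      ∫⁻ x, (fun z : ({i // i ∈ S} → ℚ_[p]) × ({i // i ∉ S} → ℚ_[p]) =>
        VV p β z.1 * VV p β z.2)
        (MeasurableEquiv.piEquivPiSubtypeProd (fun _ : ι => ℚ_[p]) (fun i => i ∈ S) x)
        ∂(Measure.pi ν) := by
    refine lintegral_congr_ae ?_
    filter_upwards [hae] with x hx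
    refine VV_split p β S x fun i hi j hj => hXY _ ?_ _ ?_
    · simpa [hi] using hx i
    · simpa [hj] using hx j
  rw [h1, hmp.lintegral_comp (f := fun z : ({i // i ∈ S} → ℚ_[p]) × ({i // i ∉ S} → ℚ_[p]) =>
        VV p β z.1 * VV p β z.2) (((measurable_VV p β).comp measurable_fst).mul
        ((measurable_VV p β).comp measurable_snd))]
  have e1 : (fun i : {i // i ∈ S} => ν i) = fun _ => μ.restrict X := by
    funext i; simp [hν]
  have e2 : (fun i : {i // i ∉ S} => ν i) = fun _ => μ.restrict Y := by
    funext i; simp [hν, i.2]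
  rw [lintegral_prod_mul (measurable_VV p β).aemeasurable (measurable_VV p β).aemeasurable]
  unfold WW
  congr 1
  · rw [← e1]; congr!
  · rw [← e2]

lemma WW_union (β : ℝ) (N : ℕ) (μ : Measure ℚ_[p]) [SigmaFinite μ]
    (X Y : Set ℚ_[p]) (hX : MeasurableSet X) (hY : MeasurableSet Y)
    (hXY : ∀ x ∈ X, ∀ y ∈ Y, ‖x - y‖ = 1) :
    WW p β (Fin N) (μ.restrict (X ∪ Y)) = ∑ k ∈ Finset.range (N + 1),
      (N.choose k : ℝ≥0∞) * (WW p β (Fin k) (μ.restrict X) * WW p β (Fin (N - k)) (μ.restrict Y)) := by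
  have hd : Disjoint X Y := by
    rw [Set.disjoint_left]
    intro x hx hy
    simpa using hXY x hx x hy
  rw [Measure.restrict_union hd hY]
  rw [WW, pi_add_eq, lintegral_finsetSum_measure]
  simp_rw [WW_term p β μ X Y hX hY hXY]
  have : ∀ S : Finset (Fin N), WW p β {i // i ∈ S} (μ.restrict X) *
      WW p β {i // i ∉ S} (μ.restrict Y) =
      (fun k => WW p β (Fin k) (μ.restrict X) * WW p β (Fin (N - k)) (μ.restrict Y)) S.card := by
    intro S
    simp only
    rw [WW_equiv p β (Fintype.equivFinOfCardEq (α := {i // i ∈ S}) (n := S.card) (by simp)),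
      WW_equiv p β (Fintype.equivFinOfCardEq (α := {i // i ∉ S}) (n := N - S.card)
        (by simp [Fintype.card_subtype_compl]))]
  rw [Finset.sum_congr rfl fun S _ => this S]
  rw [← Finset.powerset_univ, Finset.sum_powerset_apply_card (fun k => WW p β (Fin k) (μ.restrict X) * WW p β (Fin (N - k)) (μ.restrict Y))]
  simp [nsmul_eq_mul]

lemma WW_translate (β : ℝ) (N : ℕ) (μ : Measure ℚ_[p]) [SigmaFinite μ] [μ.IsAddHaarMeasure]
    (a : ℚ_[p]) :
    WW p β (Fin N) (μ.restrict {x | ‖x - a‖ < 1}) = WW p β (Fin N) (μ.restrict (Pball p)) := by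
  have hm : MeasurableSet (Pball p) := by
    have : IsOpen (Pball p) := isOpen_lt continuous_norm continuous_const
    exact this.measurableSet
  have h0 : MeasurePreserving (fun x : ℚ_[p] => x - a) (μ.restrict {x | ‖x - a‖ < 1})
      (μ.restrict (Pball p)) :=
    (measurePreserving_sub_right μ a).restrict_preimage hm
  have h := measurePreserving_pi (fun _ : Fin N => μ.restrict {x | ‖x - a‖ < 1})
    (fun _ : Fin N => μ.restrict (Pball p)) (fun _ => h0)
  unfold WW
  rw [← h.lintegral_comp (measurable_VV p β)]
  refine lintegral_congr fun x => ?_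
  simp [VV, KK, kern]

lemma WW_ne_top (β : ℝ) (hβ : 0 < β) (N : ℕ) (μ : Measure ℚ_[p]) [SigmaFinite μ]
    (hμ : μ (Zball p) = 1)
    (X : Set ℚ_[p]) (hX : MeasurableSet X) (hXZ : X ⊆ Zball p) :
    WW p β (Fin N) (μ.restrict X) ≠ ∞ := by
  have hae : ∀ᵐ x ∂(Measure.pi fun _ : Fin N => μ.restrict X), ∀ i, x i ∈ X := by
    rw [ae_all_iff]
    intro i
    exact (Measure.tendsto_eval_ae_ae (μ := fun _ : Fin N => μ.restrict X) (i := i)).eventually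
      (p := fun y => y ∈ X) (ae_restrict_mem hX)
  have hle : WW p β (Fin N) (μ.restrict X) ≤
      ∫⁻ x : Fin N → ℚ_[p], 1 ∂(Measure.pi fun _ : Fin N => μ.restrict X) := by
    unfold WW
    refine lintegral_mono_ae ?_
    filter_upwards [hae] with x hx
    unfold VV
    refine Finset.prod_le_one' fun i _ => Finset.prod_le_one' fun j _ => ?_
    unfold KK
    split_ifs
    · exact le_rfl
    · unfold kern
      rw [ENNReal.ofReal_le_one]
      refine Real.rpow_le_one (norm_nonneg _) ?_ (by positivity)
      rw [sub_eq_add_neg]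
      refine (Padic.nonarchimedean _ _).trans ?_
      rw [norm_neg]
      exact max_le (hXZ (hx i)) (hXZ (hx j))
  refine ne_top_of_le_ne_top ?_ hle
  rw [lintegral_one, Measure.pi_univ]
  refine ENNReal.prod_ne_top fun i _ => ?_
  rw [Measure.restrict_apply_univ]
  exact ne_top_of_le_ne_top (by simp) ((measure_mono hXZ).trans hμ.le)

lemma VV_pairs (β : ℝ) (hβ : 0 < β) (N : ℕ) (x : Fin N → ℚ_[p]) :
    ENNReal.ofReal (∏ q ∈ pairs N, ‖x q.1 - x q.2‖ ^ β) = VV p β x := by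
  classical
  rw [ENNReal.ofReal_prod_of_nonneg (fun _ _ => by positivity)]
  unfold VV
  rw [← Fintype.prod_prod_type' (f := fun i j => KK p β i j (x i) (x j))]
  rw [← Finset.prod_filter_mul_prod_filter_not Finset.univ (fun q : Fin N × Fin N => q.1 < q.2)]
  have h2 : ∏ q : Fin N × Fin N with ¬ q.1 < q.2,
      KK p β q.1 q.2 (x q.1) (x q.2) =
      ∏ q ∈ pairs N, kern p β (x q.1) (x q.2) := by
    refine (Finset.prod_subset_one_on_sdiff (s₁ := (pairs N).image Prod.swap)
      (f := fun q => KK p β q.1 q.2 (x q.1) (x q.2)) ?_ ?_ ?_).symm.trans ?_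
    · intro q hq
      simp [pairs] at hq ⊢
      obtain ⟨a, b, hab, rfl⟩ := hq
      exact hab.le
    · intro q hq
      simp [pairs] at hq
      have : q.1 = q.2 := le_antisymm (not_lt.mp fun h => hq.2 q.2 q.1 h rfl) hq.1
      simp [this, KK_self]
    · intro q hq
      rfl
    · rw [Finset.prod_image (Prod.swap_injective.injOn)]
      refine Finset.prod_congr rfl fun q hq => ?_
      simp [pairs] at hq
      simp [KK_ne p β hq.ne', kern_comm p β (x q.2)]
  rw [h2]
  have h1 : ∏ q : Fin N × Fin N with q.1 < q.2,
      KK p β q.1 q.2 (x q.1) (x q.2) =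
      ∏ q ∈ pairs N, kern p β (x q.1) (x q.2) := by
    refine Finset.prod_congr rfl fun q hq => ?_
    replace hq : q.1 < q.2 := (Finset.mem_filter.mp hq).2
    exact KK_ne p β hq.ne _ _
  rw [h1, ← Finset.prod_mul_distrib]
  refine Finset.prod_congr rfl fun q _ => ?_
  unfold kern
  rw [← ENNReal.ofReal_mul (by positivity), ← Real.rpow_add_of_nonneg (norm_nonneg _)
    (by positivity) (by positivity), add_halves]

lemma ZN_eq (β : ℝ) (hβ : 0 < β) (N : ℕ) (μ : Measure ℚ_[p]) [SigmaFinite μ] (X : Set ℚ_[p]) :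
    ZN p μ X N (β : ℂ) = ((WW p β (Fin N) (μ.restrict X)).toReal : ℂ) := by
  unfold ZN WW
  have : ∀ x : Fin N → ℚ_[p], ∏ q ∈ pairs N, (‖x q.1 - x q.2‖ : ℂ) ^ (β : ℂ) =
      ((∏ q ∈ pairs N, ‖x q.1 - x q.2‖ ^ β : ℝ) : ℂ) := by
    intro x
    push_cast
    exact Finset.prod_congr rfl fun q _ => (Complex.ofReal_cpow (norm_nonneg _) _).symm
  simp_rw [this]
  rw [integral_complex_ofReal, integral_eq_lintegral_of_nonneg_ae]
  · simp_rw [VV_pairs p β hβ]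
  · exact Filter.Eventually.of_forall fun x => Finset.prod_nonneg fun _ _ => by positivity
  · refine Measurable.aestronglyMeasurable ?_
    refine Finset.measurable_prod _ fun q _ => Measurable.pow_const ?_ _
    have : Continuous fun x : Fin N → ℚ_[p] => ‖x q.1 - x q.2‖ := by fun_prop
    exact this.measurable

noncomputable def gen (β : ℝ) (μ : Measure ℚ_[p]) (X : Set ℚ_[p]) : PowerSeries ℂ :=
  PowerSeries.mk fun N => ((WW p β (Fin N) (μ.restrict X)).toReal : ℂ) / (N.factorial : ℂ)

lemma gen_union (β : ℝ) (hβ : 0 < β) (μ : Measure ℚ_[p]) [SigmaFinite μ]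
    (hμ : μ (Zball p) = 1)
    (X Y : Set ℚ_[p]) (hX : MeasurableSet X) (hY : MeasurableSet Y)
    (hXZ : X ⊆ Zball p) (hYZ : Y ⊆ Zball p)
    (hXY : ∀ x ∈ X, ∀ y ∈ Y, ‖x - y‖ = 1) :
    gen p β μ (X ∪ Y) = gen p β μ X * gen p β μ Y := by
  ext N
  rw [PowerSeries.coeff_mul, Finset.Nat.sum_antidiagonal_eq_sum_range_succ_mk]
  simp only [gen, PowerSeries.coeff_mk]
  rw [WW_union p β N μ X Y hX hY hXY, ENNReal.toReal_sum]
  · push_cast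
    rw [Finset.sum_div]
    refine Finset.sum_congr rfl fun k hk => ?_
    have hk' : k ≤ N := by simpa [Nat.lt_succ_iff] using hk
    simp only [ENNReal.toReal_mul, ENNReal.toReal_natCast]
    push_cast
    rw [Nat.cast_choose ℂ hk']
    have := Nat.cast_ne_zero (R := ℂ).mpr N.factorial_ne_zero
    field_simp
  · intro k _
    exact ENNReal.mul_ne_top (ENNReal.natCast_ne_top _) (ENNReal.mul_ne_top
      (WW_ne_top p β hβ _ μ hμ X hX hXZ) (WW_ne_top p β hβ _ μ hμ Y hY hYZ))

def Xm (m : ℕ) : Set ℚ_[p] := {x | ∃ j < m, ‖x - (j : ℚ_[p])‖ < 1}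

lemma Xm_succ (m : ℕ) : Xm p (m + 1) = Xm p m ∪ {x | ‖x - (m : ℚ_[p])‖ < 1} := by
  ext x
  simp only [Xm, Set.mem_ofPred_eq, Set.mem_union]
  constructor
  · rintro ⟨j, hj, h⟩
    rcases Nat.lt_succ_iff_lt_or_eq.mp hj with h' | rfl
    · exact Or.inl ⟨j, h', h⟩
    · exact Or.inr h
  · rintro (⟨j, hj, h⟩ | h)
    · exact ⟨j, by omega, h⟩
    · exact ⟨m, by omega, h⟩

lemma meas_ball (a : ℚ_[p]) : MeasurableSet {x : ℚ_[p] | ‖x - a‖ < 1} := by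
  have : IsOpen {x : ℚ_[p] | ‖x - a‖ < 1} := isOpen_lt (by fun_prop) continuous_const
  exact this.measurableSet

lemma ball_sub (m : ℕ) : {x : ℚ_[p] | ‖x - (m : ℚ_[p])‖ < 1} ⊆ Zball p := by
  intro x hx
  have h : x = (x - m) + m := by ring
  show ‖x‖ ≤ 1
  rw [h]
  refine (Padic.nonarchimedean _ _).trans (max_le (le_of_lt hx) ?_)
  exact_mod_cast Padic.norm_int_le_one (p := p) (m : ℤ)

lemma meas_Xm (m : ℕ) : MeasurableSet (Xm p m) := by
  induction m with
  | zero => simp [Xm]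
  | succ m ih => rw [Xm_succ]; exact ih.union (meas_ball p _)

lemma Xm_sub (m : ℕ) : Xm p m ⊆ Zball p := by
  rintro x ⟨j, _, h⟩
  exact ball_sub p j h

lemma Xm_p : Xm p p = Zball p := by
  refine Set.Subset.antisymm (Xm_sub p p) fun x hx => ?_
  obtain ⟨n, hn, h⟩ := PadicInt.exists_mem_range (⟨x, hx⟩ : ℤ_[p])
  refine ⟨n, hn, ?_⟩
  exact PadicInt.mem_nonunits.mp h

lemma Xm_sep (m : ℕ) (hm : m < p) : ∀ x ∈ Xm p m, ∀ y ∈ {x : ℚ_[p] | ‖x - (m : ℚ_[p])‖ < 1},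
    ‖x - y‖ = 1 := by
  rintro x ⟨j, hj, hx⟩ y hy
  have h1 : ‖((m - j : ℕ) : ℚ_[p])‖ = 1 := by
    rw [Padic.norm_natCast_eq_one_iff]
    exact (Nat.coprime_of_lt_prime (by omega) (by omega) (Fact.out : p.Prime))
  have h2 : ‖(x - j) - (y - m)‖ < 1 := by
    rw [sub_eq_add_neg]
    refine (Padic.nonarchimedean _ _).trans_lt ?_
    rw [norm_neg]
    exact max_lt hx hy
  have h3 : x - y = ((x - j) - (y - m)) + -((m - j : ℕ) : ℚ_[p]) := by
    rw [Nat.cast_sub hj.le]; ring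
  rw [h3, Padic.add_eq_max_of_ne, norm_neg, h1, max_eq_right h2.le]
  rw [norm_neg, h1]
  exact h2.ne

lemma gen_Xm (β : ℝ) (hβ : 0 < β) (μ : Measure ℚ_[p]) [SigmaFinite μ] [μ.IsAddHaarMeasure]
    (hμ : μ (Zball p) = 1) (m : ℕ) (hm : m + 1 ≤ p) :
    gen p β μ (Xm p (m + 1)) = gen p β μ (Pball p) ^ (m + 1) := by
  induction m with
  | zero =>
    have : Xm p (0 + 1) = Pball p := by ext x; simp [Xm, Pball]
    rw [this]; simp
  | succ m ih =>
    rw [Xm_succ, gen_union p β hβ μ hμ _ _ (meas_Xm p _) (meas_ball p _) (Xm_sub p _)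
      (ball_sub p _) (Xm_sep p _ (by omega)), ih (by omega), pow_succ _ (m + 1)]
    congr 1
    unfold gen
    simp_rw [WW_translate p β _ μ]

lemma gen_Z (β : ℝ) (hβ : 0 < β) (μ : Measure ℚ_[p]) [SigmaFinite μ] [μ.IsAddHaarMeasure]
    (hμ : μ (Zball p) = 1) :
    gen p β μ (Zball p) = gen p β μ (Pball p) ^ p := by
  have hp : 0 < p := (Fact.out : p.Prime).pos
  have := gen_Xm p β hβ μ hμ (p - 1) (by omega)
  rwa [Nat.sub_add_cancel hp, Xm_p] at this

lemma sum_eq_coeff (a b : ℕ → ℂ) (N : ℕ) (hN : 1 ≤ N) :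
    ∑ k ∈ Finset.Icc 1 N, a (N - k) / ((N - k).factorial : ℂ) * (b k / ((k - 1).factorial : ℂ)) =
    PowerSeries.coeff (N - 1) ((PowerSeries.mk fun n => a n / (n.factorial : ℂ)) *
      PowerSeries.derivative ℂ (PowerSeries.mk fun n => b n / (n.factorial : ℂ))) := by
  obtain ⟨M, rfl⟩ : ∃ M, N = M + 1 := ⟨N - 1, by omega⟩
  rw [mul_comm, PowerSeries.coeff_mul, Finset.Nat.sum_antidiagonal_eq_sum_range_succ_mk]
  rw [← Finset.Ico_add_one_right_eq_Icc, Finset.sum_Ico_eq_sum_range]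
  refine Finset.sum_congr (by simp) fun k hk => ?_
  simp only [PowerSeries.coeff_derivative, PowerSeries.coeff_mk]
  have e : M + 1 - (1 + k) = M - k := by omega
  have e' : M + 1 - 1 - k = M - k := by omega
  rw [e, e', add_comm 1 k, Nat.add_sub_cancel, Nat.factorial_succ]
  have := Nat.cast_ne_zero (R := ℂ).mpr k.factorial_ne_zero
  have h2 : (k : ℂ) + 1 ≠ 0 := by exact_mod_cast k.succ_ne_zero
  push_cast
  field_simp

end helpers

theorem statement_16 (p : ℕ) [Fact p.Prime]
    (μ : Measure ℚ_[p]) [SigmaFinite μ] [μ.IsAddHaarMeasure] (hμ : μ (Zball p) = 1)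
    (β : ℝ) (hβ : 0 < β) (N : ℕ) (hN : 1 ≤ N) :
    ∑ k ∈ Finset.Icc 1 N,
        ZN p μ (Pball p) (N - k) (β : ℂ) / ((N - k).factorial : ℂ) *
          (ZN p μ (Zball p) k (β : ℂ) / ((k - 1).factorial : ℂ)) =
      (p : ℂ) * ∑ k ∈ Finset.Icc 1 N,
        ZN p μ (Zball p) (N - k) (β : ℂ) / ((N - k).factorial : ℂ) *
          (ZN p μ (Pball p) k (β : ℂ) / ((k - 1).factorial : ℂ)) := by
  simp_rw [ZN_eq p β hβ]
  rw [sum_eq_coeff (fun n => ((WW p β (Fin n) (μ.restrict (Pball p))).toReal : ℂ))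
      (fun n => ((WW p β (Fin n) (μ.restrict (Zball p))).toReal : ℂ)) N hN,
    sum_eq_coeff (fun n => ((WW p β (Fin n) (μ.restrict (Zball p))).toReal : ℂ))
      (fun n => ((WW p β (Fin n) (μ.restrict (Pball p))).toReal : ℂ)) N hN]
  change PowerSeries.coeff (N - 1) (gen p β μ (Pball p) *
      PowerSeries.derivative ℂ (gen p β μ (Zball p))) = (p : ℂ) *
    PowerSeries.coeff (N - 1) (gen p β μ (Zball p) *
      PowerSeries.derivative ℂ (gen p β μ (Pball p)))
  rw [gen_Z p β hβ μ hμ, Derivation.leibniz_pow]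
  obtain ⟨m, hm⟩ : ∃ m, p = m + 1 := ⟨p - 1, by have := (Fact.out : p.Prime).pos; omega⟩
  generalize gen p β μ (Pball p) = P
  have : P * (p • P ^ (p - 1) • PowerSeries.derivative ℂ P) =
      (p : ℂ) • (P ^ p * PowerSeries.derivative ℂ P) := by
    rw [mul_smul_comm, ← Nat.cast_smul_eq_nsmul ℂ]
    congr 1
    rw [smul_eq_mul, ← mul_assoc, ← pow_succ', Nat.sub_add_cancel (Fact.out : p.Prime).one_le]
  rw [this, PowerSeries.coeff_smul, smul_eq_mul]

end LogCoulomb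
end

section
/- For every prime p and every Borel set M ⊆ ℚ_p, ν({[x:1] : x ∈ M}) = (p/(p+1)) · ∫_M (max(1, |x|_p²))^{−1} dμ(x); that is, on the image of the embedding ι: ℚ_p → ℙ¹(ℚ_p), ι(x) = [x:1], the measure ν pulls back to the measure with density (p/(p+1))·(max(1,|x|_p²))^{−1} with respect to the Haar measure μ. -/
open MeasureTheory
open scoped LinearAlgebra.Projectivization

namespace LogCoulomb

section helpers
open Pointwise
variable (p : ℕ) [Fact p.Prime]

theorem mobius_mk (A : Matrix (Fin 2) (Fin 2) ℚ_[p]) (hA : A.det ≠ 0) (v : Fin 2 → ℚ_[p])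
    (hv : v ≠ 0) (hw : A.mulVec v ≠ 0) :
    mobius p A (Projectivization.mk ℚ_[p] v hv) = Projectivization.mk ℚ_[p] (A.mulVec v) hw := by
  obtain ⟨a, ha⟩ := Projectivization.exists_smul_eq_mk_rep ℚ_[p] v hv
  have h1 : A.mulVec (Projectivization.mk ℚ_[p] v hv).rep = a • A.mulVec v := by
    rw [← ha, Units.smul_def, Units.smul_def, Matrix.mulVec_smul]
  have h2 : A.mulVec (Projectivization.mk ℚ_[p] v hv).rep ≠ 0 := by
    rw [h1, Units.smul_def]
    exact smul_ne_zero a.ne_zero hw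
  unfold mobius
  rw [dif_pos h2, Projectivization.mk_eq_mk_iff]
  exact ⟨a, h1.symm⟩

theorem iota_inj : Function.Injective (iota p) := by
  intro x y h
  unfold iota at h
  rw [Projectivization.mk_eq_mk_iff] at h
  obtain ⟨a, ha⟩ := h
  have h0 := congrFun ha 0
  have h1 := congrFun ha 1
  simp [Units.smul_def] at h0 h1
  rw [h1] at h0
  simpa using h0.symm

theorem iota_cont : Continuous (iota p) := by
  have h : Continuous (fun x : ℚ_[p] => (⟨![x, 1], by
    intro h
    have h1 := congrFun h 1
    simp at h1⟩ : {v : Fin 2 → ℚ_[p] // v ≠ 0})) := by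
    apply Continuous.subtype_mk
    apply continuous_pi
    intro i
    fin_cases i
    · exact continuous_id
    · exact continuous_const
  exact continuous_quotient_mk'.comp h

theorem iota_open : IsOpenMap (iota p) := by
  intro U hU
  have hc : Continuous (fun v : {v : Fin 2 → ℚ_[p] // v ≠ 0} => v.1 1) :=
    (continuous_apply 1).comp continuous_subtype_val
  have hc0 : Continuous (fun v : {v : Fin 2 → ℚ_[p] // v ≠ 0} => v.1 0) :=
    (continuous_apply 0).comp continuous_subtype_val
  have key : IsOpen ({v : {v : Fin 2 → ℚ_[p] // v ≠ 0} | v.1 1 ≠ 0} ∩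
      (fun v : {v : Fin 2 → ℚ_[p] // v ≠ 0} => v.1 0 / v.1 1) ⁻¹' U) := by
    apply ContinuousOn.isOpen_inter_preimage _ _ hU
    · exact hc0.continuousOn.div hc.continuousOn (fun v hv => hv)
    · exact isOpen_ne_fun hc continuous_const
  have : (fun v : {v : Fin 2 → ℚ_[p] // v ≠ 0} => Projectivization.mk ℚ_[p] v.1 v.2) ⁻¹'
      (iota p '' U) = ({v : {v : Fin 2 → ℚ_[p] // v ≠ 0} | v.1 1 ≠ 0} ∩
      (fun v : {v : Fin 2 → ℚ_[p] // v ≠ 0} => v.1 0 / v.1 1) ⁻¹' U) := by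
    ext ⟨v, hv⟩
    simp only [Set.mem_preimage, Set.mem_image, Set.mem_inter_iff, Set.mem_ofPred_eq]
    constructor
    · rintro ⟨x, hx, h⟩
      unfold iota at h
      rw [Projectivization.mk_eq_mk_iff] at h
      obtain ⟨a, ha⟩ := h
      have h0 := congrFun ha 0
      have h1 := congrFun ha 1
      simp only [Units.smul_def, Pi.smul_apply, smul_eq_mul, Matrix.cons_val_zero,
        Matrix.cons_val_one] at h0 h1
      have hv1 : v 1 ≠ 0 := by
        intro h; rw [h, mul_zero] at h1; exact one_ne_zero h1.symm
      refine ⟨hv1, ?_⟩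
      have : v 0 / v 1 = x := by
        rw [← h0, div_eq_iff hv1, mul_right_comm, h1, one_mul]
      rwa [this]
    · rintro ⟨h1, h2⟩
      refine ⟨_, h2, ?_⟩
      unfold iota
      rw [Projectivization.mk_eq_mk_iff']
      refine ⟨(v 1)⁻¹, ?_⟩
      ext i
      fin_cases i
      · simp [div_eq_inv_mul]
      · simp [h1]
  have h2 := key
  rw [← this] at h2
  exact h2

theorem iota_me : MeasurableEmbedding (iota p) :=
  (Topology.IsOpenEmbedding.of_continuous_injective_isOpenMap
    (iota_cont p) (iota_inj p) (iota_open p)).measurableEmbedding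

theorem mobius_trans (a x : ℚ_[p]) : mobius p !![1, a; 0, 1] (iota p x) = iota p (a + x) := by
  unfold iota
  have e : Matrix.mulVec !![1, a; 0, 1] ![x, 1] = ![a + x, 1] := by
    ext i; fin_cases i <;> simp [Matrix.mulVec, add_comm]
  rw [mobius_mk p _ (by simp) _ _ (by
    rw [e]; intro h; have := congrFun h 1; simp at this)]
  congr 1

theorem mobius_swap (x : ℚ_[p]) (hx : x ≠ 0) :
    mobius p !![0, 1; 1, 0] (iota p x) = iota p x⁻¹ := by
  unfold iota
  have e : Matrix.mulVec !![0, 1; 1, 0] ![x, 1] = ![1, x] := by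
    ext i; fin_cases i <;> simp [Matrix.mulVec]
  have hne : (![1, x] : Fin 2 → ℚ_[p]) ≠ 0 := by
    intro h; have := congrFun h 0; simp at this
  rw [mobius_mk p _ (by simp) _ _ (by rwa [e]), Projectivization.mk_eq_mk_iff']
  refine ⟨x, ?_⟩
  rw [e]
  ext i; fin_cases i <;> simp [hx]

theorem cover_P1 : (Set.univ : Set (P1 p)) =
    iota p '' {x | ‖x‖ ≤ 1} ∪ mobius p !![0, 1; 1, 0] '' (iota p '' {x | ‖x‖ < 1}) := by
  symm
  rw [Set.eq_univ_iff_forall]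
  intro ξ
  induction ξ using Projectivization.ind with
  | h v hv =>
  by_cases h : ‖v 0‖ ≤ ‖v 1‖
  · left
    have hv1 : v 1 ≠ 0 := by
      intro h1
      rw [h1, norm_zero] at h
      apply hv
      ext i; fin_cases i
      · simpa using h
      · exact h1
    refine ⟨v 0 / v 1, ?_, ?_⟩
    · simp only [Set.mem_ofPred_eq, norm_div]
      exact div_le_one_of_le₀ h (norm_nonneg _)
    · unfold iota
      rw [Projectivization.mk_eq_mk_iff']
      refine ⟨(v 1)⁻¹, ?_⟩
      ext i
      fin_cases i
      · simp [div_eq_inv_mul]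
      · simp [hv1]
  · right
    push Not at h
    have hv0 : v 0 ≠ 0 := by
      intro h1
      rw [h1, norm_zero] at h
      exact absurd h (not_lt.mpr (norm_nonneg _))
    refine ⟨_, ⟨v 1 / v 0, ?_, rfl⟩, ?_⟩
    · simp only [Set.mem_ofPred_eq, norm_div]
      exact (div_lt_one (norm_pos_iff.mpr hv0)).mpr h
    · unfold iota
      have e : Matrix.mulVec !![0, 1; 1, 0] ![v 1 / v 0, 1] = ![1, v 1 / v 0] := by
        ext i; fin_cases i <;> simp [Matrix.mulVec]
      have hne : (![1, v 1 / v 0] : Fin 2 → ℚ_[p]) ≠ 0 := by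
        intro h; have := congrFun h 0; simp at this
      rw [mobius_mk p _ (by simp) _ _ (by rwa [e]), Projectivization.mk_eq_mk_iff']
      refine ⟨(v 0)⁻¹, ?_⟩
      rw [e]
      ext i; fin_cases i
      · simp [hv0]
      · simp [div_eq_inv_mul]

theorem cover_disj : Disjoint (iota p '' {x | ‖x‖ ≤ 1})
    (mobius p !![0, 1; 1, 0] '' (iota p '' {x | ‖x‖ < 1})) := by
  rw [Set.disjoint_left]
  rintro _ ⟨x, hx, rfl⟩ ⟨_, ⟨y, hy, rfl⟩, h⟩
  simp only [Set.mem_ofPred_eq] at hx hy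
  by_cases hy0 : y = 0
  · subst hy0
    unfold iota at h
    have e : Matrix.mulVec !![0, 1; 1, 0] ![(0 : ℚ_[p]), 1] = ![1, 0] := by
      ext i; fin_cases i <;> simp [Matrix.mulVec]
    have hne : (![1, 0] : Fin 2 → ℚ_[p]) ≠ 0 := by
      intro h; have := congrFun h 0; simp at this
    rw [mobius_mk p _ (by simp) _ _ (by rwa [e]), Projectivization.mk_eq_mk_iff', e] at h
    obtain ⟨a, ha⟩ := h
    have h0 := congrFun ha 0
    have h1 := congrFun ha 1
    simp at h0 h1
    simp [h1] at h0
  · rw [mobius_swap p y hy0] at h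
    have := iota_inj p h
    rw [← this, norm_inv] at hx
    have hp : 0 < ‖y‖ := norm_pos_iff.mpr hy0
    have := (one_lt_inv₀ hp).mpr hy
    linarith

theorem mobius_meas_swap_inv {M : Set ℚ_[p]} (hM : (0 : ℚ_[p]) ∉ M) :
    mobius p !![0, 1; 1, 0] '' (iota p '' M) = iota p '' (M⁻¹) := by
  ext ξ
  constructor
  · rintro ⟨_, ⟨x, hx, rfl⟩, rfl⟩
    have : x ≠ 0 := fun h => hM (h ▸ hx)
    exact ⟨x⁻¹, by simpa using hx, (mobius_swap p x this).symm⟩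
  · rintro ⟨x, hx, rfl⟩
    rw [Set.mem_inv] at hx
    have : x⁻¹ ≠ 0 := fun h => hM (h ▸ hx)
    exact ⟨_, ⟨x⁻¹, hx, rfl⟩, by rw [mobius_swap p _ this, inv_inv]⟩

/-- scaling -/
def Sc (μ : Measure ℚ_[p]) (a : ℚ_[p]) : Prop :=
  μ.map (fun x => a * x) = ENNReal.ofReal (‖a‖⁻¹) • μ

theorem Zball_eq : Zball p = Metric.closedBall 0 1 := by
  ext x; simp [Zball]

theorem Zball_meas : MeasurableSet (Zball p) := by
  rw [Zball_eq]; exact Metric.isClosed_closedBall.measurableSet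

theorem sc_of (μ : Measure ℚ_[p]) [μ.IsAddHaarMeasure] (hμ : μ (Zball p) = 1)
    (a : ℚ_[p]) (ha : a ≠ 0) (h : μ {x | ‖a * x‖ ≤ 1} = ENNReal.ofReal (‖a‖⁻¹)) : Sc p μ a := by
  have hH : (μ.map (fun x => a * x)).IsAddHaarMeasure :=
    (AddEquiv.mk (Equiv.mulLeft₀ a ha) (fun x y => mul_add a x y)).isAddHaarMeasure_map μ
      (continuous_const_mul a) (continuous_const_mul a⁻¹)
  have h1 := Measure.isAddLeftInvariant_eq_smul (μ.map (fun x => a * x)) μ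
  have h2 : (μ.map (fun x => a * x)) (Zball p) = ENNReal.ofReal (‖a‖⁻¹) := by
    rw [Measure.map_apply (measurable_const_mul a) (Zball_meas p)]
    exact h
  rw [h1] at h2
  unfold Sc
  rw [h1, ← h2]
  simp [hμ]

theorem sc_mul (μ : Measure ℚ_[p]) (a b : ℚ_[p]) (ha : Sc p μ a) (hb : Sc p μ b) :
    Sc p μ (a * b) := by
  unfold Sc at *
  have : (fun x => a * b * x) = (fun x => a * x) ∘ (fun x => b * x) := by
    ext x; simp [mul_assoc]
  rw [this, ← Measure.map_map (measurable_const_mul a) (measurable_const_mul b), hb,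
    Measure.map_smul, ha, smul_smul, norm_mul, mul_inv, ENNReal.ofReal_mul (by positivity), mul_comm]

theorem sc_inv (μ : Measure ℚ_[p]) (a : ℚ_[p]) (h0 : a ≠ 0) (ha : Sc p μ a) : Sc p μ a⁻¹ := by
  unfold Sc at *
  have : μ.map (fun x => a⁻¹ * x) = μ.map (fun x => a⁻¹ * x) := rfl
  have e : (fun x => a⁻¹ * x) ∘ (fun x => a * x) = id := by
    ext x; simp [h0]
  have h1 := Measure.map_map (μ := μ) (measurable_const_mul a⁻¹) (measurable_const_mul a)
  rw [e, Measure.map_id, ha, Measure.map_smul] at h1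
  have hn : 0 < ‖a‖ := norm_pos_iff.mpr h0
  calc μ.map (fun x => a⁻¹ * x)
      = ENNReal.ofReal (‖a⁻¹‖⁻¹) • ENNReal.ofReal (‖a‖⁻¹) • μ.map (fun x => a⁻¹ * x) := by
        rw [smul_smul, ← ENNReal.ofReal_mul (by positivity), norm_inv, inv_inv,
          mul_inv_cancel₀ hn.ne', ENNReal.ofReal_one, one_smul]
    _ = _ := by rw [h1]

theorem norm_lt_one_iff_p (x : ℚ_[p]) : ‖x‖ < 1 ↔ ‖(p : ℚ_[p])⁻¹ * x‖ ≤ 1 := by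
  have hp : (0 : ℝ) < p := by exact_mod_cast (Fact.out : p.Prime).pos
  have := Padic.norm_le_pow_iff_norm_lt_pow_add_one x (-1)
  simp only [neg_add_cancel, zpow_zero, zpow_neg, zpow_one] at this
  rw [← this, norm_mul, norm_inv, Padic.norm_p, inv_inv, ← le_div_iff₀' hp, one_div]

theorem Zball_decomp : Zball p = ⋃ k ∈ Finset.range p, (fun x => -(k : ℚ_[p]) + x) ⁻¹' {x | ‖x‖ < 1} := by
  ext x
  simp only [Set.mem_iUnion, Set.mem_preimage, Set.mem_ofPred_eq, Finset.mem_range, exists_prop]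
  constructor
  · intro hx
    let z : ℤ_[p] := ⟨x, hx⟩
    refine ⟨z.zmodRepr, z.zmodRepr_lt_p, ?_⟩
    have h := z.sub_zmodRepr_mem
    rw [PadicInt.maximalIdeal_eq_span_p, Ideal.mem_span_singleton, ← PadicInt.norm_lt_one_iff_dvd,
      PadicInt.norm_def] at h
    rw [neg_add_eq_sub]
    exact h
  · rintro ⟨k, -, hk⟩
    have : x = k + (-(k : ℚ_[p]) + x) := by ring
    show ‖x‖ ≤ 1
    rw [this]
    refine (Padic.nonarchimedean _ _).trans (max_le ?_ hk.le)
    exact_mod_cast Padic.norm_int_le_one (p := p) (k : ℤ)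

theorem mu_Pball (μ : Measure ℚ_[p]) [μ.IsAddHaarMeasure] (hμ : μ (Zball p) = 1) :
    μ {x | ‖x‖ < 1} = (p : ENNReal)⁻¹ := by
  have hm : MeasurableSet {x : ℚ_[p] | ‖x‖ < 1} :=
    (isOpen_lt continuous_norm continuous_const).measurableSet
  rw [Zball_decomp, measure_biUnion_finset] at hμ
  · simp only [measure_preimage_add, Finset.sum_const, Finset.card_range, nsmul_eq_mul] at hμ
    exact ENNReal.eq_inv_of_mul_eq_one_left (by rwa [mul_comm])
  · intro i hi j hj hij
    rw [Function.onFun, Set.disjoint_left]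
    intro x hx hy
    simp only [Set.mem_preimage, Set.mem_ofPred_eq] at hx hy
    apply hij
    have h1 : ‖((i : ℤ) - (j : ℤ) : ℤ_[p])‖ < 1 := by
      rw [PadicInt.norm_def]
      push_cast
      have : (i : ℚ_[p]) - j = (-(j : ℚ_[p]) + x) + -(-(i : ℚ_[p]) + x) := by ring
      rw [this]
      refine (Padic.nonarchimedean _ _).trans_lt (max_lt hy ?_)
      rwa [norm_neg]
    have h2 : ‖(((i : ℤ) - (j : ℤ) : ℤ) : ℤ_[p])‖ < 1 := by push_cast; exact_mod_cast h1
    rw [PadicInt.norm_int_lt_one_iff_dvd] at h2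
    have hi := Finset.mem_range.mp hi
    have hj := Finset.mem_range.mp hj
    have h3 := Int.eq_zero_of_abs_lt_dvd h2 (by rw [abs_lt]; omega)
    omega
  · intro i _
    exact hm.preimage (measurable_const_add _)

theorem sc_all (μ : Measure ℚ_[p]) [μ.IsAddHaarMeasure] (hμ : μ (Zball p) = 1)
    (a : ℚ_[p]) (ha : a ≠ 0) : Sc p μ a := by
  have hp0 : (p : ℚ_[p]) ≠ 0 := by exact_mod_cast (Fact.out : p.Prime).ne_zero
  have hp : (0 : ℝ) < p := by exact_mod_cast (Fact.out : p.Prime).pos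
  have hpi : Sc p μ (p : ℚ_[p])⁻¹ := by
    apply sc_of p μ hμ _ (inv_ne_zero hp0)
    simp only [← norm_lt_one_iff_p]
    rw [mu_Pball p μ hμ, norm_inv, inv_inv, Padic.norm_p, ENNReal.ofReal_inv_of_pos hp,
      ENNReal.ofReal_natCast]
  have hpp : Sc p μ (p : ℚ_[p]) := by
    have := sc_inv p μ _ (inv_ne_zero hp0) hpi
    rwa [inv_inv] at this
  have hu : ∀ u : ℚ_[p], ‖u‖ = 1 → Sc p μ u := by
    intro u hu
    apply sc_of p μ hμ _ (by rintro rfl; simp at hu)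
    simp only [norm_mul, hu, one_mul, inv_one, ENNReal.ofReal_one]
    exact hμ
  have hz : ∀ n : ℤ, Sc p μ ((p : ℚ_[p]) ^ n) := by
    intro n
    induction n using Int.induction_on with
    | zero => exact hu _ (by simp)
    | succ i ih => rw [zpow_add_one₀ hp0]; exact sc_mul p μ _ _ ih hpp
    | pred i ih => rw [zpow_sub_one₀ hp0]; exact sc_mul p μ _ _ ih hpi
  have : a = (p : ℚ_[p]) ^ a.valuation * ((p : ℚ_[p]) ^ (-a.valuation) * a) := by
    rw [← mul_assoc, ← zpow_add₀ hp0]; simp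
  rw [this]
  refine sc_mul p μ _ _ (hz _) (hu _ ?_)
  rw [norm_mul, Padic.norm_p_zpow, Padic.norm_eq_zpow_neg_valuation ha, ← zpow_add₀ hp.ne']
  simp

theorem lint_scale (μ : Measure ℚ_[p]) [μ.IsAddHaarMeasure] (hμ : μ (Zball p) = 1)
    (a : ℚ_[p]) (ha : a ≠ 0) (f : ℚ_[p] → ENNReal) (hf : Measurable f) :
    ∫⁻ x, f (a * x) * ENNReal.ofReal ‖x‖⁻¹ ∂μ = ∫⁻ x, f x * ENNReal.ofReal ‖x‖⁻¹ ∂μ := by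
  have h := sc_all p μ hμ a ha
  have hn : 0 < ‖a‖ := norm_pos_iff.mpr ha
  unfold Sc at h
  have hw : Measurable (fun x : ℚ_[p] => ENNReal.ofReal ‖x‖⁻¹) := by fun_prop
  have h1 := lintegral_map (μ := μ) (hf.mul hw) (measurable_const_mul a)
  rw [h, lintegral_smul_measure] at h1
  have h2 : ∀ x, (f * fun x : ℚ_[p] => ENNReal.ofReal ‖x‖⁻¹) (a * x) =
      ENNReal.ofReal ‖a‖⁻¹ * (f (a * x) * ENNReal.ofReal ‖x‖⁻¹) := by
    intro x
    simp only [Pi.mul_apply, norm_mul, mul_inv]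
    rw [ENNReal.ofReal_mul (by positivity)]
    ring
  simp only [h2] at h1
  rw [lintegral_const_mul _ (by fun_prop), smul_eq_mul] at h1
  have h3 := (ENNReal.mul_right_inj (by simpa using hn) ENNReal.ofReal_ne_top).mp h1
  exact h3.symm

theorem lint_inv (μ : Measure ℚ_[p]) [SigmaFinite μ] [μ.IsAddHaarMeasure] (hμ : μ (Zball p) = 1)
    (f : ℚ_[p] → ENNReal) (hf : Measurable f) :
    ∫⁻ x, f x⁻¹ * ENNReal.ofReal ‖x‖⁻¹ ∂μ = ∫⁻ x, f x * ENNReal.ofReal ‖x‖⁻¹ ∂μ := by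
  let w : ℚ_[p] → ENNReal := fun x => ENNReal.ofReal ‖x‖⁻¹
  have hw : Measurable w := by fun_prop
  let U : Set ℚ_[p] := {x | ‖x‖ = 1}
  have hU : MeasurableSet U := (isClosed_eq continuous_norm continuous_const).measurableSet
  let g : ℚ_[p] → ENNReal := U.indicator 1
  have hg : Measurable g := measurable_one.indicator hU
  have hg0 : g 0 = 0 := by simp [g, U]
  have hT : ∫⁻ x, g x * w x ∂μ = μ U := by
    rw [← lintegral_indicator_one hU]
    apply lintegral_congr
    intro x
    by_cases hx : x ∈ U
    · have : ‖x‖ = 1 := hx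
      simp [g, hx, w, this]
    · simp [g, hx]
  have hTtop : μ U ≠ ⊤ := by
    refine ne_top_of_le_ne_top ENNReal.one_ne_top (hμ ▸ measure_mono ?_)
    intro x hx; exact le_of_eq hx
  have hT0 : μ U ≠ 0 := by
    have : IsOpen U := by
      have := IsUltrametricDist.isOpen_sphere (0 : ℚ_[p]) (one_ne_zero)
      convert this using 1
      ext x; simp [U]
    exact this.measure_ne_zero μ ⟨1, by simp [U]⟩
  have step1 : ∫⁻ a, g a * w a * (∫⁻ x, f x⁻¹ * w x ∂μ) ∂μ
      = ∫⁻ a, ∫⁻ x, g a * w a * (f (a * x⁻¹) * w x) ∂μ ∂μ := by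
    apply lintegral_congr
    intro a
    by_cases ha : a = 0
    · simp [ha, hg0]
    · rw [lintegral_const_mul _ (by fun_prop)]
      congr 1
      have := lint_scale p μ hμ a⁻¹ (inv_ne_zero ha) (fun y => f y⁻¹) (by fun_prop)
      rw [← this]
      apply lintegral_congr
      intro x
      simp [w, mul_comm a]
  have step2 : ∫⁻ x, ∫⁻ a, g a * w a * (f (a * x⁻¹) * w x) ∂μ ∂μ
      = ∫⁻ x, ∫⁻ b, (f b * w b) * (g (b * x) * w x) ∂μ ∂μ := by
    apply lintegral_congr
    intro x
    by_cases hx : x = 0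
    · simp [hx, w]
    · have := lint_scale p μ hμ x hx (fun y => g y * f (y * x⁻¹) * w x) (by fun_prop)
      calc _ = ∫⁻ y, g y * f (y * x⁻¹) * w x * ENNReal.ofReal ‖y‖⁻¹ ∂μ := by
            apply lintegral_congr; intro y; simp only [w]; ring
        _ = _ := by
            rw [← this]
            apply lintegral_congr; intro y
            have : x * y * x⁻¹ = y := by field_simp
            rw [this, mul_comm x y]; simp only [w]; ring
  have step3 : ∫⁻ b, ∫⁻ x, (f b * w b) * (g (b * x) * w x) ∂μ ∂μ
      = ∫⁻ b, (f b * w b) * μ U ∂μ := by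
    apply lintegral_congr
    intro b
    by_cases hb : b = 0
    · simp [hb, w]
    · rw [lintegral_const_mul _ (by fun_prop), lint_scale p μ hμ b hb g hg, hT]
  rw [lintegral_mul_const _ (by fun_prop), hT, lintegral_lintegral_swap (by fun_prop), step2,
    lintegral_lintegral_swap (by fun_prop), step3, lintegral_mul_const _ (by fun_prop),
    mul_comm] at step1
  exact (ENNReal.mul_left_inj hT0 hTtop).mp step1


theorem lam_Z (μ : Measure ℚ_[p]) [SigmaFinite μ] [μ.IsAddHaarMeasure] (hμ : μ (Zball p) = 1)
    (l : Measure ℚ_[p]) [IsFiniteMeasure l]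
    (hl : ∀ a : ℚ_[p], ‖a‖ ≤ 1 → ∀ M, MeasurableSet M → l ((fun x => a + x) ⁻¹' M) = l M)
    (M : Set ℚ_[p]) (hM : MeasurableSet M) (hMZ : M ⊆ Zball p) :
    l M = l (Zball p) * μ M := by
  have hZ := Zball_meas p
  let z : ℚ_[p] → ENNReal := (Zball p).indicator 1
  let m : ℚ_[p] → ENNReal := M.indicator 1
  have hz : Measurable z := measurable_one.indicator hZ
  have hm : Measurable m := measurable_one.indicator hM
  have hadd : ∀ x y : ℚ_[p], ‖x‖ ≤ 1 → ‖y‖ ≤ 1 → ‖x + y‖ ≤ 1 := fun x y hx hy =>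
    (Padic.nonarchimedean x y).trans (max_le hx hy)
  have s1 : ∫⁻ a, ∫⁻ x, z a * m (a + x) ∂l ∂μ = l M := by
    have : ∀ a, ∫⁻ x, z a * m (a + x) ∂l = z a * l M := by
      intro a
      rw [lintegral_const_mul _ (by fun_prop)]
      by_cases ha : a ∈ Zball p
      · congr 1
        rw [← hl a ha M hM, ← lintegral_indicator_one (hM.preimage (measurable_const_add a))]
        rfl
      · simp [z, ha]
    simp only [this]
    rw [lintegral_mul_const _ hz, lintegral_indicator_one hZ, hμ, one_mul]
  have s2 : ∫⁻ x, ∫⁻ a, z a * m (a + x) ∂μ ∂l = ∫⁻ x, z x * μ M ∂l := by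
    apply lintegral_congr
    intro x
    have e : ∀ a, z a * m (a + x) = z x * m (a + x) := by
      intro a
      by_cases h : a + x ∈ M
      · have h1 : ‖a + x‖ ≤ 1 := hMZ h
        have : a ∈ Zball p ↔ x ∈ Zball p := by
          constructor
          · intro ha
            have : x = (a + x) + -a := by ring
            show ‖x‖ ≤ 1
            rw [this]
            exact hadd _ _ h1 (by rw [norm_neg]; exact ha)
          · intro ha
            have : a = (a + x) + -x := by ring
            show ‖a‖ ≤ 1
            rw [this]
            exact hadd _ _ h1 (by rw [norm_neg]; exact ha)
        by_cases hx : x ∈ Zball p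
        · simp [z, hx, this.mpr hx]
        · simp [z, hx, mt this.mp hx]
      · simp [m, h]
    simp only [e]
    rw [lintegral_const_mul _ (by fun_prop), lintegral_add_right_eq_self m x,
      lintegral_indicator_one hM]
  rw [← s1, lintegral_lintegral_swap (by fun_prop), s2, lintegral_mul_const _ hz,
    lintegral_indicator_one hZ]

theorem mu_inv (μ : Measure ℚ_[p]) [SigmaFinite μ] [μ.IsAddHaarMeasure] (hμ : μ (Zball p) = 1)
    (N : Set ℚ_[p]) (hN : MeasurableSet N) (h0 : (0 : ℚ_[p]) ∉ N) :
    μ N⁻¹ = ∫⁻ x in N, ENNReal.ofReal ((‖x‖ ^ 2)⁻¹) ∂μ := by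
  have h := lint_inv p μ hμ (fun x => N.indicator (fun x => ENNReal.ofReal ‖x‖⁻¹) x)
    (Measurable.indicator (by fun_prop) hN)
  rw [← lintegral_indicator hN, ← lintegral_indicator_one hN.inv]
  convert h using 1
  · apply lintegral_congr
    intro x
    by_cases hx : x⁻¹ ∈ N
    · have hx0 : x ≠ 0 := by rintro rfl; simp at hx; exact h0 hx
      have hn : 0 < ‖x‖ := norm_pos_iff.mpr hx0
      rw [Set.indicator_of_mem hx, Set.indicator_of_mem (by simpa using hx),
        ← ENNReal.ofReal_mul (by positivity), norm_inv, inv_inv, mul_inv_cancel₀ hn.ne']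
      simp
    · rw [Set.indicator_of_notMem hx, Set.indicator_of_notMem (by simpa using hx), zero_mul]
  · apply lintegral_congr
    intro x
    by_cases hx : x ∈ N
    · rw [Set.indicator_of_mem hx, Set.indicator_of_mem hx, ← ENNReal.ofReal_mul (by positivity)]
      congr 1
      rw [pow_two, mul_inv]
    · simp [hx]

end helpers

theorem statement_18 (p : ℕ) [Fact p.Prime]
    (μ : Measure ℚ_[p]) [SigmaFinite μ] [μ.IsAddHaarMeasure] (hμ : μ (Zball p) = 1)
    (ν : Measure (P1 p)) [IsProbabilityMeasure ν] (hν : IsGLInvariant p ν)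
    (M : Set ℚ_[p]) (hM : MeasurableSet M) :
    ν (iota p '' M) =
      (p : ENNReal) / ((p : ENNReal) + 1) *
        ∫⁻ x in M, ENNReal.ofReal ((max 1 (‖x‖ ^ 2))⁻¹) ∂μ := by
  have hme := iota_me p
  let l : Measure ℚ_[p] := ν.comap (iota p)
  have hl : ∀ M, l M = ν (iota p '' M) := fun M => hme.comap_apply ν M
  haveI : IsFiniteMeasure l := ⟨by rw [hl]; exact measure_lt_top ν _⟩
  have hswap : ∀ M : Set (P1 p), MeasurableSet M → ν (mobius p !![0, 1; 1, 0] '' M) = ν M := by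
    intro M hM
    refine hν _ ?_ (by simp) M hM
    intro i j
    fin_cases i <;> fin_cases j <;> simp
  have htr : ∀ a : ℚ_[p], ‖a‖ ≤ 1 → ∀ M, MeasurableSet M →
      l ((fun x => a + x) ⁻¹' M) = l M := by
    intro a ha M hM
    have hM' : MeasurableSet ((fun x => a + x) ⁻¹' M) := hM.preimage (measurable_const_add a)
    have h1 := hν !![1, a; 0, 1] (by
      intro i j
      fin_cases i <;> fin_cases j <;> simp [ha]) (by simp) _ (hme.measurableSet_image.mpr hM')
    rw [hl, hl, ← h1, Set.image_image]
    simp only [mobius_trans]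
    rw [← Set.image_image (iota p) (fun x => a + x), Set.image_preimage_eq _
      (add_left_surjective a)]
  have hP : MeasurableSet {x : ℚ_[p] | ‖x‖ < 1} :=
    (isOpen_lt continuous_norm continuous_const).measurableSet
  have hZ := Zball_meas p
  have hLZ := lam_Z p μ hμ l htr
  have hp0 : (p : ENNReal) ≠ 0 := by exact_mod_cast (Fact.out : p.Prime).ne_zero
  have hpt : (p : ENNReal) ≠ ⊤ := ENNReal.natCast_ne_top p
  have hc : l (Zball p) = (p : ENNReal) / ((p : ENNReal) + 1) := by
    have h1 : ν Set.univ = 1 := measure_univ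
    rw [cover_P1 p, measure_union' (cover_disj p) (hme.measurableSet_image.mpr hZ),
      hswap _ (hme.measurableSet_image.mpr hP), ← hl, ← hl,
      hLZ _ hP (fun x (hx : ‖x‖ < 1) => show ‖x‖ ≤ 1 from hx.le), mu_Pball p μ hμ] at h1
    change l (Zball p) + l (Zball p) * _ = 1 at h1
    rw [ENNReal.eq_div_iff (by simp) (by simp [hpt])]
    calc ((p : ENNReal) + 1) * l (Zball p)
        = p * (l (Zball p) + l (Zball p) * (p : ENNReal)⁻¹) := by
          rw [mul_add, mul_left_comm, ENNReal.mul_inv_cancel hp0 hpt]; ring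
      _ = p := by rw [h1, mul_one]
  have hN : MeasurableSet (M \ Zball p) := hM.diff hZ
  have hN0 : (0 : ℚ_[p]) ∉ M \ Zball p := by simp [Zball]
  have hNZ : (M \ Zball p)⁻¹ ⊆ Zball p := by
    intro x hx
    have h : ¬ ‖x⁻¹‖ ≤ 1 := hx.2
    show ‖x‖ ≤ 1
    rw [norm_inv] at h
    by_contra h2
    push Not at h2
    exact h (inv_le_one_of_one_le₀ h2.le)
  rw [← hl, ← measure_inter_add_diff M hZ, hLZ _ (hM.inter hZ) Set.inter_subset_right,
    hl (M \ Zball p), ← hswap _ (hme.measurableSet_image.mpr hN), mobius_meas_swap_inv p hN0,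
    ← hl, hLZ _ hN.inv hNZ, hc, ← mul_add, ← lintegral_inter_add_diff _ M hZ]
  congr 2
  · rw [← setLIntegral_one]
    apply setLIntegral_congr_fun (hM.inter hZ)
    intro x hx
    have h : ‖x‖ ≤ 1 := hx.2
    have : max 1 (‖x‖ ^ 2) = 1 := max_eq_left (pow_le_one₀ (norm_nonneg _) h)
    simp [this]
  · rw [mu_inv p μ hμ _ hN hN0]
    apply setLIntegral_congr_fun hN
    intro x hx
    have h : ¬ ‖x‖ ≤ 1 := hx.2
    push Not at h
    have : max 1 (‖x‖ ^ 2) = ‖x‖ ^ 2 := max_eq_right (one_le_pow₀ h.le)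
    simp only [this]

end LogCoulomb
end
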